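/- Let L ∈ 𝒩. Then there exist λ ∈ ℂ and three times continuously differentiable functions θ, u : [0,L] → ℂ, not both identically zero, satisfying −u′(x) − u‴(x) = λ·θ(x) and −θ′(x) − θ‴(x) = λ·u(x) for all x ∈ [0,L], the boundary conditions θ(0) = θ(L) = θ′(0) = θ′(L) = 0 and u(0) = u(L) = u′(L) = 0, and additionally u″(0) = 0. -/

import Mathlib

open Set

/-- The set 𝒩 = { (2π/√3)·√(k² + k·l + l²) : k, l positive integers } of critical lengths. -/
def criticalN : Set ℝ :=
  {x | ∃ k l : ℕ, 0 < k ∧ 0 < l ∧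
    x = (2 * Real.pi / Real.sqrt 3) * Real.sqrt ((k : ℝ)^2 + (k : ℝ) * (l : ℝ) + (l : ℝ)^2)}

/-!
If `-φ' - φ‴ = λφ` on `ℝ`, then `x ↦ φ(-x)` solves the same equation with `-λ`, so
`θ(x) = φ(x) + φ(-x)` and `u(x) = φ(x) - φ(-x)` solve the Boussinesq system, and `u″(0) = 0`
because `u` is odd. For `φ` take the divided difference of `r ↦ exp(rx)` at the three roots `rⱼ`
of `r³ + r + λ`: it satisfies `φ(0) = φ'(0) = 0` and `φ″(0) = 1`, so that `θ″(0) ≠ 0`. Membership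
of `L` in `𝒩` allows a choice of `λ` for which the roots are distinct and all `exp(rⱼL)` have the
same value `c`. Then `φ(x + L) = c φ(x)`, hence `φ` and `φ'` also vanish at `±L`.
-/

section Parity

/-- Twice the even part of `f`; the normalization avoids a division by `2`. -/
def symmetrize {α β : Type*} [Neg α] [Add β] (f : α → β) (x : α) : β := f x + f (-x)

/-- Twice the odd part of `f`; the normalization avoids a division by `2`. -/
def antisymmetrize {α β : Type*} [Neg α] [Sub β] (f : α → β) (x : α) : β := f x - f (-x)

variable {𝕜 F : Type*} [NontriviallyNormedField 𝕜] [NormedAddCommGroup F] [NormedSpace 𝕜 F]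
  {f : 𝕜 → F} {n : WithTop ℕ∞}

/-- The operator `f ↦ -f' - f‴` of the linear Korteweg–de Vries equation `∂ₜ f = -f' - f‴`,
which acts on each component in the linearized Boussinesq system. -/
noncomputable def kdvOp (f : 𝕜 → F) (x : 𝕜) : F := -deriv f x - deriv (deriv (deriv f)) x

lemma contDiff_symmetrize (hf : ContDiff 𝕜 n f) : ContDiff 𝕜 n (symmetrize f) :=
  hf.add (hf.comp contDiff_neg)

lemma contDiff_antisymmetrize (hf : ContDiff 𝕜 n f) : ContDiff 𝕜 n (antisymmetrize f) :=
  hf.sub (hf.comp contDiff_neg)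

lemma deriv_symmetrize (hf : Differentiable 𝕜 f) :
    deriv (symmetrize f) = antisymmetrize (deriv f) := by
  funext x
  have hneg : DifferentiableAt 𝕜 (fun y ↦ f (-y)) x := (hf.comp differentiable_neg) x
  refine (deriv_fun_add (hf x) hneg).trans ?_
  rw [deriv_comp_neg, ← sub_eq_add_neg, antisymmetrize]

lemma deriv_antisymmetrize (hf : Differentiable 𝕜 f) :
    deriv (antisymmetrize f) = symmetrize (deriv f) := by
  funext x
  have hneg : DifferentiableAt 𝕜 (fun y ↦ f (-y)) x := (hf.comp differentiable_neg) x
  refine (deriv_fun_sub (hf x) hneg).trans ?_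
  rw [deriv_comp_neg, sub_neg_eq_add, symmetrize]

lemma kdvOp_symmetrize (hf : ContDiff 𝕜 3 f) :
    kdvOp (symmetrize f) = antisymmetrize (kdvOp f) := by
  have hf' : Differentiable 𝕜 f := hf.differentiable three_ne_zero
  have hf'' : Differentiable 𝕜 (deriv f) := (hf.of_le (by norm_num)).differentiable_deriv_two
  have hf''' : Differentiable 𝕜 (deriv (deriv f)) :=
    (ContDiff.iterate_deriv' 1 2 hf).differentiable one_ne_zero
  funext x
  simp only [kdvOp, deriv_symmetrize hf', deriv_antisymmetrize hf'', deriv_symmetrize hf''',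
    antisymmetrize]
  abel

lemma kdvOp_antisymmetrize (hf : ContDiff 𝕜 3 f) :
    kdvOp (antisymmetrize f) = symmetrize (kdvOp f) := by
  have hf' : Differentiable 𝕜 f := hf.differentiable three_ne_zero
  have hf'' : Differentiable 𝕜 (deriv f) := (hf.of_le (by norm_num)).differentiable_deriv_two
  have hf''' : Differentiable 𝕜 (deriv (deriv f)) :=
    (ContDiff.iterate_deriv' 1 2 hf).differentiable one_ne_zero
  funext x
  simp only [kdvOp, deriv_antisymmetrize hf', deriv_symmetrize hf'', deriv_antisymmetrize hf''',
    symmetrize]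
  abel

lemma iteratedDeriv_eq_of_eqOn {g : 𝕜 → F} {s : Set 𝕜} {m : ℕ} {x : 𝕜} (hs : UniqueDiffOn 𝕜 s)
    (hf : ContDiffAt 𝕜 m f x) (hg : ContDiffAt 𝕜 m g x) (hfg : EqOn f g s) (hx : x ∈ s) :
    iteratedDeriv m f x = iteratedDeriv m g x := by
  rw [← iteratedDerivWithin_eq_iteratedDeriv hs hf hx,
    ← iteratedDerivWithin_eq_iteratedDeriv hs hg hx, iteratedDerivWithin_congr hfg hx]

end Parity

section ExpSum

variable {ι : Type*} [Fintype ι]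

/-- The exponential polynomial `∑ⱼ aⱼ exp (rⱼ x)` with coefficients `a` and exponents `r`, as a
function of a real variable. -/
noncomputable def expSum (a r : ι → ℂ) (x : ℝ) : ℂ := ∑ j, a j * Complex.exp (r j * x)

lemma expSum_zero (a r : ι → ℂ) : expSum a r 0 = ∑ j, a j := by
  simp [expSum]

lemma contDiff_expSum (a r : ι → ℂ) {n : WithTop ℕ∞} : ContDiff ℝ n (expSum a r) :=
  ContDiff.sum fun _ _ ↦ contDiff_const.mul
    (contDiff_const.mul Complex.ofRealCLM.contDiff).cexp

lemma deriv_expSum (a r : ι → ℂ) : deriv (expSum a r) = expSum (a * r) r := by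
  funext x
  have hexp (j : ι) : HasDerivAt (fun y : ℝ ↦ a j * Complex.exp (r j * y))
      ((a * r) j * Complex.exp (r j * x)) x := by
    have := (((hasDerivAt_id (x : ℂ)).const_mul (r j)).cexp.const_mul (a j)).comp_ofReal
    simpa [mul_assoc, mul_comm (r j)] using this
  exact (HasDerivAt.fun_sum fun j _ ↦ hexp j).deriv

lemma kdvOp_expSum {r : ι → ℂ} {lam : ℂ} (hr : ∀ j, -r j - r j ^ 3 = lam) (a : ι → ℂ) :
    kdvOp (expSum a r) = lam • expSum a r := by
  funext x
  simp only [kdvOp, deriv_expSum, expSum, Pi.smul_apply, Pi.mul_apply, smul_eq_mul,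
    Finset.mul_sum, ← Finset.sum_neg_distrib, ← Finset.sum_sub_distrib]
  exact Finset.sum_congr rfl fun j _ ↦ by rw [← hr j]; ring

lemma expSum_eq_mul_expSum_zero {r : ι → ℂ} {T : ℝ} {c : ℂ}
    (hc : ∀ j, Complex.exp (r j * T) = c) (a : ι → ℂ) :
    expSum a r T = c * expSum a r 0 := by
  rw [expSum_zero, mul_comm, Finset.sum_mul]
  simp only [expSum, hc]

end ExpSum

lemma sum_nodalWeight_mul_pow {ι K : Type*} [Fintype ι] [DecidableEq ι] [Field K] {r : ι → K}
    (hr : Function.Injective r) {k : ℕ} (hk : k < Fintype.card ι) :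
    ∑ j, Lagrange.nodalWeight Finset.univ r j * r j ^ k
      = if k + 1 = Fintype.card ι then 1 else 0 := by
  have hdeg : (Polynomial.X ^ k : Polynomial K).degree < (Finset.univ : Finset ι).card := by
    simpa using hk
  have hcoeff := Lagrange.coeff_eq_sum hr.injOn hdeg
  simp only [Polynomial.coeff_X_pow, Polynomial.eval_pow, Polynomial.eval_X,
    Finset.card_univ] at hcoeff
  simp only [Lagrange.nodalWeight, Finset.prod_inv_distrib, inv_mul_eq_div, ← hcoeff]
  exact if_congr (by lia) rfl rfl

lemma neg_sub_cube_eq_neg_prod {R : Type*} [CommRing R] {r : Fin 3 → R}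
    (hsum : r 0 + r 1 + r 2 = 0) (hpair : r 0 * r 1 + r 1 * r 2 + r 2 * r 0 = 1) (j : Fin 3) :
    -r j - r j ^ 3 = -(r 0 * r 1 * r 2) := by
  fin_cases j <;> simp only [Fin.zero_eta, Fin.mk_one, Fin.reduceFinMk]
  · linear_combination r 0 * hpair - r 0 ^ 2 * hsum
  · linear_combination r 1 * hpair - r 1 ^ 2 * hsum
  · linear_combination r 2 * hpair - r 2 ^ 2 * hsum

section CriticalLength

open Complex (I)

/-- The characteristic exponents `rⱼ = 2πi nⱼ / (3L)` attached to the length `L`, where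
`n = (-(2k + l), k - l, k + 2l)` is the integer vector with sum zero and consecutive differences
`n₁ - n₀ = 3k` and `n₂ - n₁ = 3l`. -/
noncomputable def criticalExponent (L : ℝ) (k l : ℤ) (j : Fin 3) : ℂ :=
  2 * Real.pi * I / (3 * L) * (![-(2 * k + l), k - l, k + 2 * l] j : ℤ)

variable {L : ℝ} {k l : ℤ}

lemma criticalExponent_injective (hL : L ≠ 0) (hk : 0 < k) (hl : 0 < l) :
    Function.Injective (criticalExponent L k l) := by
  have hscale : 2 * Real.pi * I / (3 * L) ≠ 0 := by simp [hL, Real.pi_ne_zero]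
  have hmono : StrictMono ![-(2 * k + l), k - l, k + 2 * l] := by
    rw [Fin.strictMono_iff_lt_succ]
    intro j
    fin_cases j
    · change -(2 * k + l) < k - l
      lia
    · change k - l < k + 2 * l
      lia
  exact (mul_right_injective₀ hscale).comp (Int.cast_injective.comp hmono.injective)

lemma sum_criticalExponent :
    criticalExponent L k l 0 + criticalExponent L k l 1 + criticalExponent L k l 2 = 0 := by
  simp only [criticalExponent, Matrix.cons_val]
  push_cast
  ring

lemma sum_mul_criticalExponent (hL : L ≠ 0)
    (hLkl : 3 * L ^ 2 = 4 * Real.pi ^ 2 * (k ^ 2 + k * l + l ^ 2)) :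
    criticalExponent L k l 0 * criticalExponent L k l 1
      + criticalExponent L k l 1 * criticalExponent L k l 2
      + criticalExponent L k l 2 * criticalExponent L k l 0 = 1 := by
  have hL' : (L : ℂ) ≠ 0 := mod_cast hL
  have hLkl' : (3 * L ^ 2 : ℂ) = 4 * Real.pi ^ 2 * (k ^ 2 + k * l + l ^ 2) := mod_cast hLkl
  simp only [criticalExponent, Matrix.cons_val]
  push_cast
  field_simp
  rw [Complex.I_sq]
  linear_combination -3 * hLkl'

lemma exp_criticalExponent_mul (hL : L ≠ 0) (j : Fin 3) :
    Complex.exp (criticalExponent L k l j * L) = Complex.exp (criticalExponent L k l 1 * L) := by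
  have hL' : (L : ℂ) ≠ 0 := mod_cast hL
  refine Complex.exp_eq_exp_iff_exists_int.2 ⟨![-k, 0, l] j, ?_⟩
  fin_cases j <;>
    simp only [criticalExponent, Fin.zero_eta, Fin.mk_one, Fin.reduceFinMk, Matrix.cons_val] <;>
    push_cast <;> field_simp <;> ring

lemma pos_of_mem_criticalN (hL : L ∈ criticalN) : 0 < L := by
  obtain ⟨k, l, hk, hl, rfl⟩ := hL
  positivity

lemma exists_sq_eq_of_mem_criticalN (hL : L ∈ criticalN) :
    ∃ k l : ℤ, 0 < k ∧ 0 < l ∧ 3 * L ^ 2 = 4 * Real.pi ^ 2 * (k ^ 2 + k * l + l ^ 2) := by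
  obtain ⟨k, l, hk, hl, rfl⟩ := hL
  refine ⟨k, l, mod_cast hk, mod_cast hl, ?_⟩
  rw [mul_pow, div_pow, Real.sq_sqrt (by positivity), Real.sq_sqrt (by positivity)]
  push_cast
  ring

lemma exists_exponents_of_mem_criticalN (hL : L ∈ criticalN) :
    ∃ r : Fin 3 → ℂ, Function.Injective r ∧ (∃ lam, ∀ j, -r j - r j ^ 3 = lam) ∧
      ∃ c, ∀ j, Complex.exp (r j * L) = c := by
  have hL0 : L ≠ 0 := (pos_of_mem_criticalN hL).ne'
  obtain ⟨k, l, hk, hl, hLkl⟩ := exists_sq_eq_of_mem_criticalN hL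
  exact ⟨criticalExponent L k l, criticalExponent_injective hL0 hk hl,
    ⟨_, neg_sub_cube_eq_neg_prod sum_criticalExponent (sum_mul_criticalExponent hL0 hLkl)⟩,
    ⟨_, exp_criticalExponent_mul hL0⟩⟩

end CriticalLength

lemma exists_kdvOp_eigenfunction {r : Fin 3 → ℂ} {lam c : ℂ} {L : ℝ} (hinj : Function.Injective r)
    (hr : ∀ j, -r j - r j ^ 3 = lam) (hc : ∀ j, Complex.exp (r j * L) = c) :
    ∃ φ : ℝ → ℂ, ContDiff ℝ 3 φ ∧ kdvOp φ = lam • φ ∧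
      (∀ x ∈ ({0, L, -L} : Set ℝ), φ x = 0 ∧ deriv φ x = 0) ∧ deriv (deriv φ) 0 = 1 := by
  set w := Lagrange.nodalWeight Finset.univ r
  have hcneg (j : Fin 3) : Complex.exp (r j * (-L : ℝ)) = c⁻¹ := by
    rw [Complex.ofReal_neg, mul_neg, Complex.exp_neg, hc]
  have hw0 : expSum w r 0 = 0 := by
    simpa [expSum_zero, w] using sum_nodalWeight_mul_pow hinj (k := 0) (by simp)
  have hw1 : expSum (w * r) r 0 = 0 := by
    simpa [expSum_zero, w] using sum_nodalWeight_mul_pow hinj (k := 1) (by simp)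
  have hw2 : expSum (w * r * r) r 0 = 1 := by
    simpa [expSum_zero, w, mul_assoc, sq] using sum_nodalWeight_mul_pow hinj (k := 2) (by simp)
  refine ⟨expSum w r, contDiff_expSum w r, kdvOp_expSum hr w, ?_, by simpa only [deriv_expSum]⟩
  rintro x (rfl | rfl | rfl)
  · exact ⟨hw0, by rw [deriv_expSum, hw1]⟩
  · simp [deriv_expSum, expSum_eq_mul_expSum_zero hc, hw0, hw1]
  · simp [deriv_expSum, expSum_eq_mul_expSum_zero hcneg, hw0, hw1]

/-- If `L ∈ 𝒩`, the spectral problem for the linearized Boussinesq system with boundary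
conditions `θ(0) = θ(L) = θ′(0) = θ′(L) = 0`, `u(0) = u(L) = u′(L) = 0` admits a nontrivial
solution satisfying the additional condition `deriv (deriv u) 0 = 0`. -/
theorem statement_3 (L : ℝ) (hLN : L ∈ criticalN) :
    ∃ (lam : ℂ) (θ u : ℝ → ℂ),
      ContDiff ℝ 3 θ ∧ ContDiff ℝ 3 u ∧
      ¬(∀ x ∈ Icc (0 : ℝ) L, θ x = 0 ∧ u x = 0) ∧
      (∀ x ∈ Icc (0 : ℝ) L, -deriv u x - deriv (deriv (deriv u)) x = lam * θ x) ∧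
      (∀ x ∈ Icc (0 : ℝ) L, -deriv θ x - deriv (deriv (deriv θ)) x = lam * u x) ∧
      θ 0 = 0 ∧ θ L = 0 ∧ deriv θ 0 = 0 ∧ deriv θ L = 0 ∧
      u 0 = 0 ∧ u L = 0 ∧ deriv u L = 0 ∧
      deriv (deriv u) 0 = 0 := by
  obtain ⟨r, hinj, ⟨lam, hr⟩, c, hc⟩ := exists_exponents_of_mem_criticalN hLN
  obtain ⟨φ, hφ, hode, hbc, hφ''⟩ := exists_kdvOp_eigenfunction hinj hr hc
  obtain ⟨⟨h0, -⟩, ⟨hL, hL'⟩, hnegL, hnegL'⟩ :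
      (φ 0 = 0 ∧ deriv φ 0 = 0) ∧ (φ L = 0 ∧ deriv φ L = 0) ∧ φ (-L) = 0 ∧ deriv φ (-L) = 0 := by
    simpa using hbc
  have hLpos : 0 < L := pos_of_mem_criticalN hLN
  have hdiff : Differentiable ℝ φ := hφ.differentiable three_ne_zero
  have hdiff' : Differentiable ℝ (deriv φ) := (hφ.of_le (by norm_num)).differentiable_deriv_two
  refine ⟨lam, symmetrize φ, antisymmetrize φ, contDiff_symmetrize hφ, contDiff_antisymmetrize hφ,
    fun hzero ↦ ?_, fun x _ ↦ ?_, fun x _ ↦ ?_, ?_⟩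
  · have h := iteratedDeriv_eq_of_eqOn (m := 2) (g := 0) (uniqueDiffOn_Icc hLpos)
      ((contDiff_symmetrize hφ).of_le (by norm_num)).contDiffAt contDiffAt_const
      (fun x hx ↦ (hzero x hx).1) (left_mem_Icc.2 hLpos.le)
    simp [iteratedDeriv_succ, deriv_symmetrize hdiff, deriv_antisymmetrize hdiff', symmetrize,
      hφ''] at h
  · change kdvOp (antisymmetrize φ) x = _
    simp [kdvOp_antisymmetrize hφ, hode, symmetrize, mul_add]
  · change kdvOp (symmetrize φ) x = _
    simp [kdvOp_symmetrize hφ, hode, antisymmetrize, mul_sub]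
  · simp [deriv_symmetrize hdiff, deriv_antisymmetrize hdiff, deriv_symmetrize hdiff',
      symmetrize, antisymmetrize, h0, hL, hL', hnegL, hnegL']
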